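/- arXiv:1801.06162 — 5 statements merged into one kernel-verified Lean document; each statement's English description precedes it below -/
import Mathlib

section
/- Let p be a prime and let T be an abelian group in which every element has order a power of p. Suppose the subgroup T[p] = {t ∈ T : p·t = 0} is finite. Then every injective endomorphism of T is surjective. -/
/-- Let `p` be a prime and `T` an abelian group in which every element has
order a power of `p`. If `T[p] = {t : p • t = 0}` is finite, then every injective
endomorphism of `T` is surjective. -/
theorem injective_endomorphism_surjective_of_p_torsion
    {T : Type*} [AddCommGroup T] (p : ℕ) (hp : p.Prime)
    (htor : ∀ t : T, ∃ k : ℕ, p ^ k • t = 0)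
    (hfin : {t : T | p • t = 0}.Finite)
    (σ : T →+ T) (hinj : Function.Injective σ) :
    Function.Surjective σ := by
  have hk : ∀ k : ℕ, {t : T | p ^ k • t = 0}.Finite := by
    intro k
    induction k with
    | zero => simp
    | succ k ih =>
      have h := Set.Finite.preimage' (f := fun t : T => p • t) ih (by
        intro b _
        by_cases hb : ∃ x : T, p • x = b
        · obtain ⟨x, hx⟩ := hb
          refine (hfin.image (fun t => x + t)).subset ?_
          intro y hy
          have hy' : p • y = b := hy
          refine ⟨y - x, ?_, by simp⟩
          change p • (y - x) = 0
          rw [smul_sub, hy', hx, sub_self]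
        · refine Set.finite_empty.subset ?_
          intro y hy
          exact hb ⟨y, hy⟩)
      refine h.subset ?_
      intro t ht
      change p ^ k • (p • t) = 0
      have ht' : p ^ (k + 1) • t = 0 := ht
      rwa [pow_succ, mul_smul] at ht'
  intro t
  obtain ⟨k, ht⟩ := htor t
  have hm : Set.MapsTo σ {t : T | p ^ k • t = 0} {t : T | p ^ k • t = 0} := by
    intro x hx
    have hx' : p ^ k • x = 0 := hx
    change p ^ k • σ x = 0
    rw [← map_nsmul, hx', map_zero]
  have hb := ((hk k).injOn_iff_bijOn_of_mapsTo hm).1 hinj.injOn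
  obtain ⟨x, _, hx⟩ := hb.surjOn ht
  exact ⟨x, hx⟩
end

section
/- Let A be a torsion-free abelian group of finite rank (i.e. ℚ ⊗_ℤ A is a finite-dimensional ℚ-vector space) and let B be a subgroup of A of the same rank (equivalently, the quotient A/B is a torsion group). Suppose σ is an endomorphism of A with σ(B) = B. Then σ is an automorphism of A. -/
open TensorProduct

theorem aux_finrank_le {A : Type*} [AddCommGroup A] [FiniteDimensional ℚ (ℚ ⊗[ℤ] A)]
    (H : Submodule ℤ A) [Module.Free ℤ H] [Module.Finite ℤ H] :
    Module.finrank ℤ H ≤ Module.finrank ℚ (ℚ ⊗[ℤ] A) := by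
  rw [← Module.finrank_baseChange (R := ℚ) (S := ℤ) (M' := H)]
  refine LinearMap.finrank_le_finrank_of_injective (f := H.subtype.baseChange ℚ) ?_
  exact Module.Flat.lTensor_preserves_injective_linearMap (M := ℚ) H.subtype
    H.injective_subtype

theorem aux_mk_injective {A : Type*} [AddCommGroup A] [Module.IsTorsionFree ℤ A] (a : A)
    (h : (1 : ℚ) ⊗ₜ[ℤ] a = 0) : a = 0 := by
  have h1 := Module.Flat.rTensor_preserves_injective_linearMap (M := A)
    (Algebra.linearMap ℤ ℚ) (by intro x y hxy; simpa using hxy)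
  have h2 : (1 : ℤ) ⊗ₜ[ℤ] a = 0 := by
    apply h1
    simpa using h
  simpa using congrArg (TensorProduct.lid ℤ A) h2

theorem aux_inj {A : Type*} [AddCommGroup A] [Module.IsTorsionFree ℤ A]
    [FiniteDimensional ℚ (ℚ ⊗[ℤ] A)]
    (B : AddSubgroup A) (hB : ∀ a : A, ∃ n : ℕ, 0 < n ∧ n • a ∈ B)
    (σ : A →+ A) (hσB : B.map σ = B) : Function.Injective σ := by
  have hs : Function.Surjective (σ.toIntLinearMap.baseChange ℚ) := by
    intro x
    induction x using TensorProduct.induction_on with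
    | zero => exact ⟨0, map_zero _⟩
    | add x y hx hy =>
      obtain ⟨u, rfl⟩ := hx
      obtain ⟨v, rfl⟩ := hy
      exact ⟨u + v, map_add _ _ _⟩
    | tmul q a =>
      obtain ⟨n, hn, ha⟩ := hB a
      rw [← hσB] at ha
      obtain ⟨b, -, hb⟩ := ha
      refine ⟨(q / n) ⊗ₜ b, ?_⟩
      have h0 : (n : ℚ) ≠ 0 := by positivity
      have hq : n • (q / n) = q := by
        rw [nsmul_eq_mul]; field_simp
      rw [LinearMap.baseChange_tmul]
      change (q / n) ⊗ₜ[ℤ] (σ b) = _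
      rw [hb, TensorProduct.tmul_smul, TensorProduct.smul_tmul', hq]
  have hi := LinearMap.injective_iff_surjective.mpr hs
  rw [injective_iff_map_eq_zero]
  intro a ha
  apply aux_mk_injective
  apply hi
  rw [LinearMap.baseChange_tmul, map_zero]
  change (1 : ℚ) ⊗ₜ[ℤ] (σ a) = _
  rw [ha, TensorProduct.tmul_zero]

theorem aux_pigeon {A : Type*} [AddCommGroup A] [Module.IsTorsionFree ℤ A]
    [FiniteDimensional ℚ (ℚ ⊗[ℤ] A)]
    (B : AddSubgroup A) (n : ℕ) (hn : 0 < n) (s : ℕ → A) (hs : ∀ i, n • s i ∈ B) :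
    ∃ i j, i < j ∧ s i - s j ∈ B := by
  haveI : NeZero n := ⟨hn.ne'⟩
  set r := Module.finrank ℚ (ℚ ⊗[ℤ] A) with hr
  let t : Fin (n ^ r + 1) → A := fun i => s i
  let H : Submodule ℤ A := Submodule.span ℤ (Set.range t)
  haveI : Module.Finite ℤ H := Module.Finite.span_of_finite ℤ (Set.finite_range t)
  haveI : Module.Free ℤ H := inferInstance
  let b := Module.finBasis ℤ H
  have hk : Module.finrank ℤ H ≤ r := aux_finrank_le H
  have hH : ∀ x ∈ H, n • x ∈ B := by
    intro x hx
    induction hx using Submodule.span_induction with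
    | mem x hx => obtain ⟨i, rfl⟩ := hx; exact hs i
    | zero => simp
    | add x y _ _ hx hy => rw [smul_add]; exact B.add_mem hx hy
    | smul c x _ hx => rw [smul_comm]; exact B.zsmul_mem hx c
  have ht : ∀ i, t i ∈ H := fun i => Submodule.subset_span ⟨i, rfl⟩
  let f : Fin (n ^ r + 1) → (Fin (Module.finrank ℤ H) → ZMod n) :=
    fun i l => ((b.repr ⟨t i, ht i⟩ l : ℤ) : ZMod n)
  have hcard : Fintype.card (Fin (Module.finrank ℤ H) → ZMod n) <
      Fintype.card (Fin (n ^ r + 1)) := by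
    rw [Fintype.card_fun, ZMod.card, Fintype.card_fin, Fintype.card_fin]
    exact Nat.lt_succ_of_le (Nat.pow_le_pow_right hn hk)
  obtain ⟨i, j, hij, hf⟩ := Fintype.exists_ne_map_eq_of_card_lt f hcard
  have key : t i - t j ∈ B := by
    have hd : ∀ l, ∃ c : ℤ, b.repr ⟨t i, ht i⟩ l - b.repr ⟨t j, ht j⟩ l = n * c := by
      intro l
      have h1 := congrFun hf l
      have h2 := (ZMod.intCast_eq_intCast_iff_dvd_sub _ _ _).mp h1.symm
      exact h2
    choose c hc using hd
    have he : (⟨t i, ht i⟩ - ⟨t j, ht j⟩ : H) = n • ∑ l, c l • b l := by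
      apply b.ext_elem
      intro l
      rw [map_sub, Finsupp.sub_apply, hc, map_nsmul, Finsupp.smul_apply, b.repr_sum_self,
        nsmul_eq_mul]
    have := congrArg Subtype.val he
    have h3 : t i - t j = n • ((∑ l, c l • b l : H) : A) := this
    rw [h3]
    exact hH _ (Subtype.property _)
  rcases lt_or_gt_of_ne hij with h | h
  · exact ⟨i, j, h, key⟩
  · refine ⟨j, i, h, ?_⟩
    have := B.neg_mem key
    rwa [neg_sub] at this

/-- Let `A` be a torsion-free abelian group of finite rank (i.e. the
`ℚ`-vector space `ℚ ⊗[ℤ] A` is finite-dimensional) and `B ≤ A` a subgroup of the same rank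
(equivalently `A/B` is torsion, i.e. every element of `A` has a positive multiple lying
in `B`).  If `σ` is an endomorphism of `A` with `σ(B) = B`, then `σ` is an automorphism
of `A`. -/
theorem endomorphism_bijective_of_stabilises_full_rank_subgroup
    {A : Type*} [AddCommGroup A]
    (htf : ∀ (a : A) (n : ℕ), 0 < n → n • a = 0 → a = 0)
    [FiniteDimensional ℚ (ℚ ⊗[ℤ] A)]
    (B : AddSubgroup A) (hB : ∀ a : A, ∃ n : ℕ, 0 < n ∧ n • a ∈ B)
    (σ : A →+ A) (hσB : B.map σ = B) :
    Function.Bijective σ := by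
  haveI : IsAddTorsionFree A := by
    refine ⟨fun n hn x y hxy => ?_⟩
    have := htf (x - y) n (Nat.pos_of_ne_zero hn) (by rw [smul_sub]; exact sub_eq_zero.mpr hxy)
    exact sub_eq_zero.mp this
  have hinj := aux_inj B hB σ hσB
  refine ⟨hinj, fun a => ?_⟩
  have hmem : ∀ x, x ∈ B → σ x ∈ B := fun x hx => by
    rw [← hσB]; exact ⟨x, hx, rfl⟩
  have hback : ∀ x, σ x ∈ B → x ∈ B := fun x hx => by
    rw [← hσB] at hx
    obtain ⟨y, hy, hxy⟩ := hx
    rwa [← hinj hxy]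
  obtain ⟨n, hn, ha⟩ := hB a
  have hs : ∀ i : ℕ, n • (σ^[i] a) ∈ B := by
    intro i
    induction i with
    | zero => exact ha
    | succ i ih =>
      rw [Function.iterate_succ_apply', ← map_nsmul]
      exact hmem _ ih
  obtain ⟨i, j, hij, h⟩ := aux_pigeon B n hn (fun i => σ^[i] a) hs
  obtain ⟨d, rfl⟩ := Nat.exists_eq_add_of_lt hij
  have hred : ∀ i : ℕ, σ^[i] a - σ^[i + d + 1] a ∈ B → a - σ^[d + 1] a ∈ B := by
    intro i
    induction i with
    | zero => intro h; simpa using h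
    | succ i ih =>
      intro h
      apply ih
      apply hback
      rw [map_sub, ← Function.iterate_succ_apply' σ, ← Function.iterate_succ_apply' σ]
      have e : (i + d + 1).succ = i + 1 + d + 1 := by omega
      rw [e]
      exact h
  have h2 := hred i h
  rw [← hσB] at h2
  obtain ⟨y, -, hy⟩ := h2
  refine ⟨y + σ^[d] a, ?_⟩
  rw [map_add, ← Function.iterate_succ_apply' σ]
  have hy' : σ y = a - σ^[d + 1] a := hy
  rw [hy', sub_add_cancel]
end

section
/- Let N be a torsion-free nilpotent group of finite Prüfer rank and σ an injective endomorphism of N. Then σ preserves the upper central series: σ(Z^{i}(N)) ≤ Z^{i}(N) for every i ≥ 0. In particular σ maps the centre Z(N) into itself. -/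
/-- A group has finite Prüfer rank if there is `r` such that every finitely generated
subgroup can be generated by at most `r` elements. -/
def HasFinitePruferRank (G : Type*) [Group G] : Prop :=
  ∃ r : ℕ, ∀ H : Subgroup G, H.FG →
    ∃ S : Finset G, S.card ≤ r ∧ Subgroup.closure (S : Set G) = H

open scoped commutatorElement

theorem aux_comm_pow {G : Type*} [Group G] (x y : G) (h : ⁅x, y⁆ ∈ Subgroup.center G) (n : ℕ) :
    ⁅x ^ n, y⁆ = ⁅x, y⁆ ^ n := by
  induction n with
  | zero => simp
  | succ n ih =>
    have h1 : ⁅x ^ (n + 1), y⁆ = x ^ n * ⁅x, y⁆ * (x ^ n)⁻¹ * ⁅x ^ n, y⁆ := by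
      simp only [commutatorElement_def, pow_succ]; group
    have h2 := (Subgroup.mem_center_iff.mp h) (x ^ n)
    rw [h1, h2, ih, pow_succ']
    group

theorem aux_comm_pow_mem {G : Type*} [Group G] (j : ℕ) (x y : G)
    (h : ⁅x, y⁆ ∈ Subgroup.upperCentralSeries G (j + 1)) (n : ℕ) :
    ⁅x ^ n, y⁆ ∈ Subgroup.upperCentralSeries G j ↔ ⁅x, y⁆ ^ n ∈ Subgroup.upperCentralSeries G j := by
  have h' : ⁅x, y⁆ ∈ Subgroup.upperCentralSeriesStep (Subgroup.upperCentralSeries G j) := h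
  rw [Subgroup.upperCentralSeriesStep_eq_comap_center, Subgroup.mem_comap,
    map_commutatorElement] at h'
  have := aux_comm_pow _ _ h' n
  rw [← map_pow, ← map_commutatorElement, ← map_commutatorElement, ← map_pow] at this
  simp only [← QuotientGroup.eq_one_iff]
  simp only [QuotientGroup.mk'_apply] at this
  rw [this]

theorem aux_tf {G : Type*} [Group G] (htf : ∀ (g : G) (n : ℕ), 0 < n → g ^ n = 1 → g = 1)
    (n : ℕ) (hn : 0 < n) (j : ℕ) : ∀ c ∈ Subgroup.upperCentralSeries G (j + 1),
      c ^ n ∈ Subgroup.upperCentralSeries G j → c ∈ Subgroup.upperCentralSeries G j := by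
  induction j with
  | zero =>
    intro c _ h
    simp only [Subgroup.upperCentralSeries_zero, Subgroup.mem_bot] at h ⊢
    exact htf c n hn h
  | succ j ih =>
    intro c hc h
    rw [Subgroup.mem_upperCentralSeries_succ_iff] at h hc ⊢
    intro g
    exact ih _ (hc g) ((aux_comm_pow_mem j c g (hc g) n).1 (h g))

theorem aux_root_comm {G : Type*} [Group G] [Group.IsNilpotent G]
    (htf : ∀ (g : G) (n : ℕ), 0 < n → g ^ n = 1 → g = 1)
    (n : ℕ) (hn : 0 < n) (i : ℕ) (x y : G) (h : ⁅x ^ n, y⁆ ∈ Subgroup.upperCentralSeries G i) :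
    ⁅x, y⁆ ∈ Subgroup.upperCentralSeries G i := by
  obtain ⟨m, hm⟩ := Group.IsNilpotent.nilpotent G
  have key : ∀ k, ⁅x, y⁆ ∈ Subgroup.upperCentralSeries G (i + k) →
      ⁅x, y⁆ ∈ Subgroup.upperCentralSeries G i := by
    intro k
    induction k with
    | zero => exact id
    | succ k ih =>
      intro hk
      apply ih
      apply aux_tf htf n hn _ _ hk
      exact (aux_comm_pow_mem _ x y hk n).1
        (Subgroup.upperCentralSeries_mono G (Nat.le_add_right i k) h)
  apply key m
  apply Subgroup.upperCentralSeries_mono G (Nat.le_add_left m i)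
  rw [hm]; trivial

theorem aux_rank_sub {G : Type*} [Group G] (h : HasFinitePruferRank G) (K : Subgroup G) :
    HasFinitePruferRank K := by
  classical
  obtain ⟨r, hr⟩ := h
  refine ⟨r, fun H hH => ?_⟩
  obtain ⟨S, hS, hc⟩ := hr (H.map K.subtype) (by
    obtain ⟨T, rfl⟩ := hH
    exact ⟨T.image K.subtype, by rw [Finset.coe_image, MonoidHom.map_closure]⟩)
  have hSK : ∀ s ∈ S, s ∈ K := by
    intro s hs
    have : s ∈ H.map K.subtype := hc ▸ Subgroup.subset_closure hs
    obtain ⟨t, _, rfl⟩ := this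
    exact t.2
  refine ⟨S.attach.image (fun s => ⟨s.1, hSK s.1 s.2⟩),
    (Finset.card_image_le.trans (by simpa using hS)), ?_⟩
  apply Subgroup.map_injective K.subtype_injective
  rw [MonoidHom.map_closure, ← hc]
  congr 1
  ext a
  simp only [Finset.coe_image, Set.mem_image, Finset.mem_coe, Finset.mem_attach, true_and]
  constructor
  · rintro ⟨_, ⟨s, rfl⟩, rfl⟩; exact s.2
  · intro ha; exact ⟨_, ⟨⟨a, ha⟩, rfl⟩, rfl⟩

theorem aux_rank_quot {G : Type*} [Group G] (h : HasFinitePruferRank G) (K : Subgroup G)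
    [K.Normal] : HasFinitePruferRank (G ⧸ K) := by
  classical
  obtain ⟨r, hr⟩ := h
  refine ⟨r, fun H hH => ?_⟩
  obtain ⟨T, rfl⟩ := hH
  have hf : Function.Surjective (QuotientGroup.mk' K) := QuotientGroup.mk'_surjective K
  obtain ⟨S, hS, hc⟩ := hr (Subgroup.closure (T.image (Function.surjInv hf) : Finset G))
    ⟨_, rfl⟩
  refine ⟨S.image (QuotientGroup.mk' K), Finset.card_image_le.trans hS, ?_⟩
  rw [Finset.coe_image, ← MonoidHom.map_closure, hc, MonoidHom.map_closure, Finset.coe_image,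
    Set.image_image]
  simp only [Function.surjInv_eq, Set.image_id']

theorem aux_abelian_rank {A : Type*} [CommGroup A] (h : HasFinitePruferRank A) :
    ∃ r : ℕ, Module.rank ℤ (Additive A) ≤ r := by
  classical
  obtain ⟨r, hr⟩ := h
  refine ⟨r, rank_le fun s hs => ?_⟩
  obtain ⟨S, hS, hc⟩ := hr (Subgroup.closure (s.image Additive.toMul : Finset A)) ⟨_, rfl⟩
  have hle : Submodule.span ℤ (s : Set (Additive A)) ≤
      Submodule.span ℤ ((S.image Additive.ofMul : Finset (Additive A)) : Set (Additive A)) := by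
    rw [Submodule.span_le]
    intro x hx
    have hx' : x.toMul ∈ Subgroup.closure (S : Set A) := by
      rw [hc]
      apply Subgroup.subset_closure
      simp only [Finset.coe_image]
      exact ⟨x, hx, rfl⟩
    have : ∀ a ∈ Subgroup.closure (S : Set A), Additive.ofMul a ∈
        Submodule.span ℤ ((S.image Additive.ofMul : Finset (Additive A)) : Set (Additive A)) := by
      intro a ha
      induction ha using Subgroup.closure_induction with
      | mem a ha => exact Submodule.subset_span (by simpa using ha)
      | one => exact Submodule.zero_mem _
      | mul a b _ _ ha hb => exact Submodule.add_mem _ ha hb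
      | inv a _ ha => exact Submodule.neg_mem _ ha
    exact this _ hx'
  have h1 := rank_span_set (R := ℤ) (s := (s : Set (Additive A))) hs
  have h2 := (Submodule.rank_mono hle).trans (rank_span_finset_le _)
  rw [h1] at h2
  simp only [Finset.coe_sort_coe, Cardinal.mk_coe_finset, Nat.cast_le] at h2
  exact h2.trans (Finset.card_image_le.trans hS)

theorem aux_abelian {A : Type*} [CommGroup A] (h : HasFinitePruferRank A)
    (K : ℕ → Subgroup A) (hK : Antitone K) :
    ∃ m, ∀ n ≥ m, ∀ x ∈ K n, ∃ k : ℕ, 0 < k ∧ x ^ k ∈ K (n + 1) := by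
  obtain ⟨r, hr⟩ := aux_abelian_rank h
  let L : ℕ → Submodule ℤ (Additive A) :=
    fun n => AddSubgroup.toIntSubmodule (Subgroup.toAddSubgroup (K n))
  have hmem : ∀ n (x : A), Additive.ofMul x ∈ L n ↔ x ∈ K n := fun n x => Iff.rfl
  have hL : Antitone L := fun a b hab x hx => hK hab hx
  have hfin : ∀ n, ∃ k : ℕ, Module.rank ℤ (L n) = k := fun n =>
    Cardinal.lt_aleph0.1 (((Submodule.rank_le (L n)).trans hr).trans_lt Cardinal.natCast_lt_aleph0)
  choose f hf using hfin
  have hfa : Antitone f := by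
    intro a b hab
    have := Submodule.rank_mono (hL hab)
    rw [hf, hf] at this
    exact_mod_cast this
  refine ⟨Function.argmin f, fun n hn x hx => ?_⟩
  have e1 : f (n + 1) = f n := le_antisymm (hfa (Nat.le_succ n))
    ((hfa hn).trans (Function.argmin_le f (n + 1)))
  have hle : L (n + 1) ≤ L n := hL (Nat.le_succ n)
  have e2 := rank_quotient_add_rank_of_isDomain ((L (n + 1)).submoduleOf (L n))
  rw [(Submodule.submoduleOfEquivOfLe hle).rank_eq, hf, hf, e1] at e2
  have e3 : Module.rank ℤ (L n ⧸ (L (n + 1)).submoduleOf (L n)) = 0 := by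
    apply Cardinal.eq_of_add_eq_add_right (b := (f n : Cardinal)) _ Cardinal.natCast_lt_aleph0
    rw [e2, zero_add]
  rw [rank_eq_zero_iff] at e3
  obtain ⟨a, ha, hax⟩ := e3 (Submodule.Quotient.mk ⟨Additive.ofMul x, hx⟩)
  rw [← Submodule.Quotient.mk_smul, Submodule.Quotient.mk_eq_zero] at hax
  have hax' : x ^ a ∈ K (n + 1) := hax
  refine ⟨a.natAbs, Int.natAbs_pos.2 ha, ?_⟩
  rw [← zpow_natCast]
  rcases Int.natAbs_eq a with h | h
  · rwa [h] at hax'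
  · rw [h, zpow_neg] at hax'
    exact (Subgroup.inv_mem_iff _).1 hax'

theorem aux_chain (G : Type*) [Group G] [Group.IsNilpotent G] : HasFinitePruferRank G →
    ∀ K : ℕ → Subgroup G, Antitone K →
    ∃ m, ∀ n ≥ m, ∀ x ∈ K n, ∃ k : ℕ, 0 < k ∧ x ^ k ∈ K (n + 1) := by
  refine Group.nilpotent_center_quotient_ind (P := fun G _ _ => HasFinitePruferRank G →
    ∀ K : ℕ → Subgroup G, Antitone K →
    ∃ m, ∀ n ≥ m, ∀ x ∈ K n, ∃ k : ℕ, 0 < k ∧ x ^ k ∈ K (n + 1)) G ?_ ?_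
  · intro G _ _ _ K _
    refine ⟨0, fun n _ x _ => ⟨1, one_pos, ?_⟩⟩
    rw [Subsingleton.elim (x ^ 1) 1]
    exact one_mem _
  · intro G _ _ ih h K hK
    obtain ⟨m₁, h₁⟩ := ih (aux_rank_quot h _)
      (fun n => (K n).map (QuotientGroup.mk' (Subgroup.center G)))
      (fun a b hab => Subgroup.map_mono (hK hab))
    let _ : CommGroup (Subgroup.center G) :=
      { (inferInstance : Group (Subgroup.center G)) with
        mul_comm := fun a b => Subtype.ext (Subgroup.mem_center_iff.1 b.2 a) }
    obtain ⟨m₂, h₂⟩ := aux_abelian (A := Subgroup.center G) (aux_rank_sub h (Subgroup.center G))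
      (fun n => (K n).subgroupOf (Subgroup.center G))
      (fun a b hab x hx => hK hab hx)
    refine ⟨max m₁ m₂, fun n hn x hx => ?_⟩
    obtain ⟨k, hk, g, hg, hgx⟩ := h₁ n (le_of_max_le_left hn) _ (Subgroup.mem_map_of_mem _ hx)
    rw [← map_pow, QuotientGroup.mk'_apply, QuotientGroup.mk'_apply, QuotientGroup.eq] at hgx
    obtain ⟨l, hl, hz⟩ := h₂ n (le_of_max_le_right hn) ⟨_, hgx⟩
      ((K n).mul_mem ((K n).inv_mem (hK (Nat.le_succ n) hg)) ((K n).pow_mem hx k))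
    have hz' : (g⁻¹ * x ^ k) ^ l ∈ K (n + 1) := hz
    refine ⟨k * l, Nat.mul_pos hk hl, ?_⟩
    have hcomm : Commute g (g⁻¹ * x ^ k) := Subgroup.mem_center_iff.1 hgx g
    have : x ^ (k * l) = g ^ l * (g⁻¹ * x ^ k) ^ l := by
      rw [← hcomm.mul_pow, mul_inv_cancel_left, pow_mul]
    rw [this]
    exact (K (n + 1)).mul_mem ((K (n + 1)).pow_mem hg l) hz'

theorem aux_power {G : Type*} [Group G] [Group.IsNilpotent G] (h : HasFinitePruferRank G)
    (σ : G →* G) (hinj : Function.Injective σ) (x : G) :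
    ∃ k : ℕ, 0 < k ∧ ∃ g, σ g = x ^ k := by
  let K : ℕ → Subgroup G := fun n => Nat.rec ⊤ (fun _ H => H.map σ) n
  have hs : ∀ n, K (n + 1) = (K n).map σ := fun n => rfl
  have hK : Antitone K := by
    apply antitone_nat_of_succ_le
    intro n
    induction n with
    | zero => exact le_top
    | succ n ih => rw [hs (n + 1), hs n]; exact Subgroup.map_mono ih
  obtain ⟨m, hm⟩ := aux_chain G h K hK
  have key : ∀ n, (∀ x ∈ K n, ∃ k : ℕ, 0 < k ∧ x ^ k ∈ K (n + 1)) →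
      (∀ x ∈ K 0, ∃ k : ℕ, 0 < k ∧ x ^ k ∈ K 1) := by
    intro n
    induction n with
    | zero => exact id
    | succ n ih =>
      intro H
      apply ih
      intro x hx
      obtain ⟨k, hk, hk'⟩ := H (σ x) (Subgroup.mem_map_of_mem σ hx)
      refine ⟨k, hk, ?_⟩
      rw [hs (n + 1), ← map_pow] at hk'
      exact (Subgroup.mem_map_iff_mem hinj).1 hk'
  obtain ⟨k, hk, g, _, hg⟩ := key m (hm m le_rfl) x (Subgroup.mem_top x)
  exact ⟨k, hk, g, hg⟩

/-- Let `N` be a torsion-free nilpotent group of finite Prüfer rank and `σ`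
an injective endomorphism of `N`.  Then `σ` preserves the upper central series:
`σ(Zⁱ(N)) ≤ Zⁱ(N)` for every `i ≥ 0`; in particular `σ` maps the centre into itself. -/
theorem injective_endomorphism_preserves_upper_central_series
    {N : Type*} [Group N] [Group.IsNilpotent N]
    (htf : ∀ (g : N) (n : ℕ), 0 < n → g ^ n = 1 → g = 1)
    (hrank : HasFinitePruferRank N)
    (σ : N →* N) (hinj : Function.Injective σ) :
    (∀ i : ℕ, (upperCentralSeries N i).map σ ≤ upperCentralSeries N i) ∧
      (∀ z ∈ Subgroup.center N, σ z ∈ Subgroup.center N) := by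
  have main : ∀ i : ℕ, (Subgroup.upperCentralSeries N i).map σ ≤
      Subgroup.upperCentralSeries N i := by
    intro i
    induction i with
    | zero => simp
    | succ i ih =>
      rintro _ ⟨x, hx, rfl⟩
      have hx' := Subgroup.mem_upperCentralSeries_succ_iff.1 hx
      rw [Subgroup.mem_upperCentralSeries_succ_iff]
      intro y
      obtain ⟨k, hk, g, hg⟩ := aux_power hrank σ hinj y
      rw [← commutatorElement_inv]
      apply Subgroup.inv_mem
      apply aux_root_comm htf k hk
      rw [← commutatorElement_inv, ← hg, ← map_commutatorElement]
      exact Subgroup.inv_mem _ (ih (Subgroup.mem_map_of_mem σ (hx' g)))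
  refine ⟨main, fun z hz => ?_⟩
  rw [← Subgroup.upperCentralSeries_one] at hz ⊢
  exact main 1 (Subgroup.mem_map_of_mem σ hz)
end

section
/- Let N be the group of upper unitriangular 3×3 rational matrices with (1,2)-entry a ∈ ℤ and (2,3)- and (1,3)-entries b, c ∈ ℤ[1/2]. The map φ₁ sending the matrix with parameters (a,b,c) to the matrix with parameters (2a, b/2, c) is a well-defined injective group endomorphism of N which is not surjective, and φ₁ restricts to the identity on the central subgroup Z = {matrices with parameters (0,0,c), c ∈ ℤ[1/2]}; in particular φ₁ induces an automorphism of the centre of N but is not an automorphism of N. -/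
/-- `x ∈ ℤ[1/2]`, i.e. `x = m / 2^k` for some integer `m` and natural number `k`. -/
def IsDyadic (x : ℚ) : Prop := ∃ (m : ℤ) (k : ℕ), x = (m : ℚ) / 2 ^ k

lemma IsDyadic.add {x y : ℚ} (hx : IsDyadic x) (hy : IsDyadic y) : IsDyadic (x + y) := by
  obtain ⟨m, k, rfl⟩ := hx
  obtain ⟨m', k', rfl⟩ := hy
  have h1 : ((2 : ℚ) ^ k) ≠ 0 := by positivity
  have h2 : ((2 : ℚ) ^ k') ≠ 0 := by positivity
  refine ⟨m * 2 ^ k' + m' * 2 ^ k, k + k', ?_⟩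
  rw [div_add_div _ _ h1 h2, pow_add]
  push_cast
  ring_nf

lemma IsDyadic.neg {x : ℚ} (hx : IsDyadic x) : IsDyadic (-x) := by
  obtain ⟨m, k, rfl⟩ := hx
  exact ⟨-m, k, by push_cast; ring⟩

lemma IsDyadic.intMul (m : ℤ) {x : ℚ} (hx : IsDyadic x) : IsDyadic ((m : ℚ) * x) := by
  obtain ⟨m', k, rfl⟩ := hx
  exact ⟨m * m', k, by push_cast; ring⟩

lemma IsDyadic.sub {x y : ℚ} (hx : IsDyadic x) (hy : IsDyadic y) : IsDyadic (x - y) := by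
  simpa [sub_eq_add_neg] using hx.add hy.neg

/-- The upper unitriangular `3 × 3` rational matrix with parameters `(a, b, c)`:
rows `(1, a, c)`, `(0, 1, b)`, `(0, 0, 1)`. -/
def uni (a b c : ℚ) : Matrix (Fin 3) (Fin 3) ℚ := !![1, a, c; 0, 1, b; 0, 0, 1]

lemma uni_mul (a b c a' b' c' : ℚ) :
    uni a b c * uni a' b' c' = uni (a + a') (b + b') (c + c' + a * b') := by
  ext i j
  fin_cases i <;> fin_cases j <;>
    simp [uni, Matrix.mul_fin_three] <;> ring

lemma uni_one : uni 0 0 0 = 1 := by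
  ext i j
  fin_cases i <;> fin_cases j <;> simp [uni, Matrix.one_apply, Matrix.vecHead, Matrix.vecTail]

lemma uni_mul_inv (a b c : ℚ) : uni a b c * uni (-a) (-b) (a * b - c) = 1 := by
  rw [uni_mul, show a + -a = (0:ℚ) by ring, show b + -b = (0:ℚ) by ring,
    show c + (a * b - c) + a * -b = (0:ℚ) by ring, uni_one]

lemma uni_inv_mul (a b c : ℚ) : uni (-a) (-b) (a * b - c) * uni a b c = 1 := by
  rw [uni_mul, show -a + a = (0:ℚ) by ring, show -b + b = (0:ℚ) by ring,
    show a * b - c + c + -a * b = (0:ℚ) by ring, uni_one]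

/-- The unitriangular matrix with parameters `(a,b,c)` as an element of `GL₃(ℚ)`. -/
def uniUnit (a b c : ℚ) : Matrix.GeneralLinearGroup (Fin 3) ℚ :=
  ⟨uni a b c, uni (-a) (-b) (a * b - c), uni_mul_inv a b c, uni_inv_mul a b c⟩

/-- The group `N` of upper unitriangular `3 × 3` rational matrices with `(1,2)`-entry in
`ℤ` and `(2,3)`- and `(1,3)`-entries in `ℤ[1/2]`, as a subgroup of `GL₃(ℚ)`. -/
def heisenbergN : Subgroup (Matrix.GeneralLinearGroup (Fin 3) ℚ) where
  carrier := {M | ∃ (a : ℤ) (b c : ℚ), IsDyadic b ∧ IsDyadic c ∧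
    (M : Matrix (Fin 3) (Fin 3) ℚ) = uni (a : ℚ) b c}
  one_mem' := ⟨0, 0, 0, ⟨0, 0, by norm_num⟩, ⟨0, 0, by norm_num⟩, by
    push_cast; exact uni_one.symm⟩
  mul_mem' := by
    rintro M M' ⟨a, b, c, hb, hc, hM⟩ ⟨a', b', c', hb', hc', hM'⟩
    refine ⟨a + a', b + b', c + c' + (a : ℚ) * b', hb.add hb',
      (hc.add hc').add (IsDyadic.intMul a hb'), ?_⟩
    push_cast
    rw [hM, hM', uni_mul]
  inv_mem' := by
    rintro M ⟨a, b, c, hb, hc, hM⟩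
    refine ⟨-a, -b, (a : ℚ) * b - c, hb.neg, (IsDyadic.intMul a hb).sub hc, ?_⟩
    push_cast
    rw [hM, Matrix.inv_eq_right_inv (uni_mul_inv (a : ℚ) b c)]

lemma uni_inj {a b c a' b' c' : ℚ} (h : uni a b c = uni a' b' c') :
    a = a' ∧ b = b' ∧ c = c' := by
  have h1 := congrFun (congrFun h 0) 1
  have h2 := congrFun (congrFun h 1) 2
  have h3 := congrFun (congrFun h 0) 2
  simp [uni] at h1 h2 h3
  exact ⟨h1, h2, h3⟩

lemma IsDyadic.half {x : ℚ} (hx : IsDyadic x) : IsDyadic (x / 2) := by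
  obtain ⟨m, k, rfl⟩ := hx
  exact ⟨m, k + 1, by rw [pow_succ, div_div]⟩

lemma heisenbergN_exists (g : heisenbergN) : ∃ (a : ℤ) (b c : ℚ), IsDyadic b ∧ IsDyadic c ∧
    ((g : Matrix.GeneralLinearGroup (Fin 3) ℚ) : Matrix (Fin 3) (Fin 3) ℚ) = uni (a : ℚ) b c :=
  g.2

/-- The underlying map of `φ₁`, read off from the matrix entries. -/
def phiFun (g : heisenbergN) : heisenbergN :=
  ⟨uniUnit (2 * g.1.1 0 1) (g.1.1 1 2 / 2) (g.1.1 0 2), by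
    obtain ⟨a, b, c, hb, hc, h⟩ := heisenbergN_exists g
    refine ⟨2 * a, b / 2, c, hb.half, hc, ?_⟩
    rw [h]
    simp [uniUnit, uni]⟩

lemma phiFun_spec (g : heisenbergN) (a b c : ℚ)
    (h : ((g : Matrix.GeneralLinearGroup (Fin 3) ℚ) : Matrix (Fin 3) (Fin 3) ℚ) = uni a b c) :
    ((phiFun g : Matrix.GeneralLinearGroup (Fin 3) ℚ) : Matrix (Fin 3) (Fin 3) ℚ) =
      uni (2 * a) (b / 2) c := by
  simp only [phiFun]
  rw [h]
  simp [uniUnit, uni]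

/-- The endomorphism `φ₁` of `N`. -/
def phiHom : heisenbergN →* heisenbergN :=
  MonoidHom.mk' phiFun (by
    intro g g'
    obtain ⟨a, b, c, hb, hc, h⟩ := heisenbergN_exists g
    obtain ⟨a', b', c', hb', hc', h'⟩ := heisenbergN_exists g'
    apply Subtype.ext
    apply Units.ext
    have e : (((g * g' : heisenbergN) : Matrix.GeneralLinearGroup (Fin 3) ℚ) :
        Matrix (Fin 3) (Fin 3) ℚ) = uni (a + a') (b + b') (c + c' + a * b') := by
      rw [← uni_mul, ← h, ← h']; rfl
    rw [phiFun_spec _ _ _ _ e, Subgroup.coe_mul, Units.val_mul, phiFun_spec _ _ _ _ h,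
      phiFun_spec _ _ _ _ h', uni_mul]
    congr 1 <;> ring)

/-- The map `φ₁` sending the unitriangular matrix with parameters
`(a, b, c)` to the one with parameters `(2a, b/2, c)` is a well-defined injective group
endomorphism of `N = heisenbergN` which is not surjective, and it restricts to the
identity on the central subgroup `Z = {matrices with parameters (0,0,c), c ∈ ℤ[1/2]}`;
in particular `φ₁` induces an automorphism of the centre of `N` but is not an
automorphism of `N`. -/
theorem phi_one_injective_not_surjective_identity_on_center :
    ∃ φ : heisenbergN →* heisenbergN,
      (∀ (g : heisenbergN) (a b c : ℚ),
        ((g : Matrix.GeneralLinearGroup (Fin 3) ℚ) : Matrix (Fin 3) (Fin 3) ℚ) =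
            uni a b c →
        (((φ g : Matrix.GeneralLinearGroup (Fin 3) ℚ)) : Matrix (Fin 3) (Fin 3) ℚ) =
            uni (2 * a) (b / 2) c) ∧
      Function.Injective φ ∧
      ¬ Function.Surjective φ ∧
      (∀ g : heisenbergN,
        (∃ c : ℚ, IsDyadic c ∧
          ((g : Matrix.GeneralLinearGroup (Fin 3) ℚ) : Matrix (Fin 3) (Fin 3) ℚ) =
            uni 0 0 c) → φ g = g) := by
  refine ⟨phiHom, phiFun_spec, ?_, ?_, ?_⟩
  · intro g g' hgg
    obtain ⟨a, b, c, hb, hc, h⟩ := heisenbergN_exists g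
    obtain ⟨a', b', c', hb', hc', h'⟩ := heisenbergN_exists g'
    have e1 := phiFun_spec _ _ _ _ h
    have e2 := phiFun_spec _ _ _ _ h'
    have hgg2 : phiFun g = phiFun g' := hgg
    rw [hgg2, e2] at e1
    obtain ⟨h1, h2, h3⟩ := uni_inj e1
    apply Subtype.ext
    apply Units.ext
    rw [h, h']
    congr 1 <;> linarith
  · intro hs
    obtain ⟨g, hg⟩ := hs ⟨uniUnit 1 0 0, 1, 0, 0, ⟨0, 0, by norm_num⟩, ⟨0, 0, by norm_num⟩,
      by simp [uniUnit]⟩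
    obtain ⟨a, b, c, hb, hc, h⟩ := heisenbergN_exists g
    have e1 := phiFun_spec _ _ _ _ h
    have hg2 : phiFun g = _ := hg
    rw [hg2] at e1
    have e2 : uni 1 0 0 = uni (2 * a) (b / 2) c := e1
    obtain ⟨h1, -, -⟩ := uni_inj e2
    have h4 : (1 : ℤ) = 2 * a := by exact_mod_cast h1
    omega
  · rintro g ⟨c, -, h⟩
    apply Subtype.ext
    apply Units.ext
    have e1 := phiFun_spec _ _ _ _ h
    rw [h]
    refine e1.trans ?_
    congr 1 <;> norm_num
end

section
/- Let N be the group of upper unitriangular 3×3 rational matrices with (1,2)-entry a ∈ ℤ and (2,3)- and (1,3)-entries b, c ∈ ℤ[1/2]. The map φ₂ sending the matrix with parameters (a,b,c) to the matrix with parameters (2a, b, 2c) is a well-defined injective group endomorphism of N which is not surjective, and φ₂ restricts to a bijection of the central subgroup Z = {matrices with parameters (0,0,c), c ∈ ℤ[1/2]} onto itself; in particular φ₂ induces an automorphism of the centre of N but is not an automorphism of N. -/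
/-- The map `φ₂` sending the unitriangular matrix with parameters
`(a, b, c)` to the one with parameters `(2a, b, 2c)` is a well-defined injective group
endomorphism of `N = heisenbergN` which is not surjective, and it restricts to a bijection
of the central subgroup `Z = {matrices with parameters (0,0,c), c ∈ ℤ[1/2]}` onto itself;
in particular `φ₂` induces an automorphism of the centre of `N` but is not an
automorphism of `N`. -/
theorem phi_two_injective_not_surjective_bijective_on_center :
    ∃ φ : heisenbergN →* heisenbergN,
      (∀ (g : heisenbergN) (a b c : ℚ),
        ((g : Matrix.GeneralLinearGroup (Fin 3) ℚ) : Matrix (Fin 3) (Fin 3) ℚ) =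
            uni a b c →
        (((φ g : Matrix.GeneralLinearGroup (Fin 3) ℚ)) : Matrix (Fin 3) (Fin 3) ℚ) =
            uni (2 * a) b (2 * c)) ∧
      Function.Injective φ ∧
      ¬ Function.Surjective φ ∧
      Set.BijOn φ
        {g : heisenbergN | ∃ c : ℚ, IsDyadic c ∧
          ((g : Matrix.GeneralLinearGroup (Fin 3) ℚ) : Matrix (Fin 3) (Fin 3) ℚ) =
            uni 0 0 c}
        {g : heisenbergN | ∃ c : ℚ, IsDyadic c ∧
          ((g : Matrix.GeneralLinearGroup (Fin 3) ℚ) : Matrix (Fin 3) (Fin 3) ℚ) =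
            uni 0 0 c} := by
  have huinj : ∀ {a b c a' b' c' : ℚ}, uni a b c = uni a' b' c' → a = a' ∧ b = b' ∧ c = c' := by
    intro a b c a' b' c' h
    have h1 := congrFun (congrFun h 0) 1
    have h2 := congrFun (congrFun h 1) 2
    have h3 := congrFun (congrFun h 0) 2
    simp [uni] at h1 h2 h3
    exact ⟨h1, h2, h3⟩
  have hex : ∀ g : heisenbergN, ∃ (a : ℤ) (b c : ℚ), IsDyadic b ∧ IsDyadic c ∧
      ((g : Matrix.GeneralLinearGroup (Fin 3) ℚ) : Matrix (Fin 3) (Fin 3) ℚ) = uni (a : ℚ) b c :=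
    fun g => g.2
  have hext : ∀ g h : heisenbergN,
      ((g : Matrix.GeneralLinearGroup (Fin 3) ℚ) : Matrix (Fin 3) (Fin 3) ℚ) =
      ((h : Matrix.GeneralLinearGroup (Fin 3) ℚ) : Matrix (Fin 3) (Fin 3) ℚ) → g = h :=
    fun g h e => Subtype.ext (Units.ext e)
  have hmk : ∀ (a : ℤ) (b c : ℚ), IsDyadic b → IsDyadic c → ∃ g : heisenbergN,
      ((g : Matrix.GeneralLinearGroup (Fin 3) ℚ) : Matrix (Fin 3) (Fin 3) ℚ) = uni (a : ℚ) b c :=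
    fun a b c hb hc => ⟨⟨uniUnit a b c, a, b, c, hb, hc, rfl⟩, rfl⟩
  have hF : ∀ g : heisenbergN, ∃ g' : heisenbergN, ∀ a b c : ℚ,
      ((g : Matrix.GeneralLinearGroup (Fin 3) ℚ) : Matrix (Fin 3) (Fin 3) ℚ) = uni a b c →
      ((g' : Matrix.GeneralLinearGroup (Fin 3) ℚ) : Matrix (Fin 3) (Fin 3) ℚ) =
        uni (2 * a) b (2 * c) := by
    intro g
    obtain ⟨a, b, c, hb, hc, hg⟩ := hex g
    obtain ⟨g', hg'⟩ := hmk (2 * a) b (2 * c) hb (by simpa using IsDyadic.intMul 2 hc)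
    refine ⟨g', fun a' b' c' h => ?_⟩
    obtain ⟨rfl, rfl, rfl⟩ := huinj (hg.symm.trans h)
    rw [hg']
    push_cast
    rfl
  choose F hF using hF
  have hinj : Function.Injective F := by
    intro g h e
    obtain ⟨a, b, c, hb, hc, hg⟩ := hex g
    obtain ⟨a', b', c', hb', hc', hh⟩ := hex h
    have e1 := hF g _ _ _ hg
    rw [e, hF h _ _ _ hh] at e1
    obtain ⟨h1, h2, h3⟩ := huinj e1
    apply hext
    rw [hg, hh, h2, show (a : ℚ) = a' by linarith, show c = c' by linarith]
  refine ⟨MonoidHom.mk' F ?_, hF, hinj, ?_, ?_, hinj.injOn, ?_⟩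
  · intro g h
    obtain ⟨a, b, c, hb, hc, hg⟩ := hex g
    obtain ⟨a', b', c', hb', hc', hh⟩ := hex h
    have e : ((g * h : heisenbergN) : Matrix.GeneralLinearGroup (Fin 3) ℚ).val =
        uni (a + a') (b + b') (c + c' + a * b') := by
      rw [← uni_mul, ← hg, ← hh]; rfl
    apply hext
    rw [hF _ _ _ _ e, Subgroup.coe_mul, Units.val_mul, hF _ _ _ _ hg, hF _ _ _ _ hh, uni_mul]
    congr 1 <;> ring
  · intro hs
    obtain ⟨g, hg⟩ := hmk 1 0 0 ⟨0, 0, by norm_num⟩ ⟨0, 0, by norm_num⟩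
    obtain ⟨x, hx⟩ := hs g
    obtain ⟨a, b, c, hb, hc, hxe⟩ := hex x
    have e1 := hF x _ _ _ hxe
    rw [show F x = g from hx, hg] at e1
    have h1 := (huinj e1).1
    have h2 : (1 : ℤ) = 2 * a := by exact_mod_cast h1
    omega
  · rintro g ⟨c, hc, hg⟩
    refine ⟨2 * c, by simpa using IsDyadic.intMul 2 hc, ?_⟩
    have := hF g _ _ _ hg
    rw [mul_zero] at this
    exact this
  · rintro g ⟨c, hc, hg⟩
    have hc2 : IsDyadic (c / 2) := by
      obtain ⟨m, k, rfl⟩ := hc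
      exact ⟨m, k + 1, by rw [pow_succ, div_div]⟩
    obtain ⟨x, hx⟩ := hmk 0 0 (c / 2) ⟨0, 0, by norm_num⟩ hc2
    rw [Int.cast_zero] at hx
    refine ⟨x, ⟨c / 2, hc2, hx⟩, ?_⟩
    apply hext
    have := hF x _ _ _ hx
    rw [mul_zero, mul_div_cancel₀ c two_ne_zero] at this
    exact this.trans hg.symm
end
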